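/- Let r be a positive integer, let G be an elongated claw with root c that has at least one short limb, and let x be a leaf of G adjacent to c. Then |I^(r)_x(G)| ≥ |I^(r)_v(G)| for every vertex v of G; that is, x is the centre of a largest r-star of G. -/

import Mathlib

open Finset SimpleGraph
open scoped Classical

variable {V : Type*}

/-- The finset of independent sets of a finite graph `G`. -/
noncomputable def indepSets [Fintype V] (G : SimpleGraph V) : Finset (Finset V) :=
  univ.filter fun A => ∀ x ∈ A, ∀ y ∈ A, ¬ G.Adj x y

/-- The finset of independent sets of size `r` of `G`, i.e. `I^(r)(G)`. -/
noncomputable def indepSetsSize [Fintype V] (G : SimpleGraph V) (r : ℕ) : Finset (Finset V) :=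
  (indepSets G).filter fun A => A.card = r

/-- The `r`-star centred at `v`: independent sets of size `r` containing `v`. -/
noncomputable def ekrStar [Fintype V] (G : SimpleGraph V) (r : ℕ) (v : V) : Finset (Finset V) :=
  (indepSetsSize G r).filter fun A => v ∈ A

/-- An elongated claw: a tree with a designated root in which every vertex other than
the root has degree at most 2. -/
def IsElongatedClaw [Fintype V] (G : SimpleGraph V) (root : V) : Prop :=
  G.IsTree ∧ ∀ v, v ≠ root → G.degree v ≤ 2

/-!
Let `p` be a path from the leaf `x` to `v`, and let `σ` be the involution of `V` that reverses `p`
and fixes every other vertex. It maps `v` to `x`, so it suffices that `σ '' A` is independent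
whenever `A` is an independent set containing `v`. As `σ` permutes the edges of `p`, an edge of `p`
never joins two points of `σ '' A`. By the degree bounds, the only vertices of `p` on edges outside
`p` are its second vertex `c` and its end `v`. Moreover `c ∉ σ '' A`, because `σ c` is adjacent to
`v ∈ A`; hence an edge outside `p` with both ends in `σ '' A` would already have both ends in `A`.
-/

section IndependentSets

theorem isIndepSet_image_of_mem_or_neighborSet_subset {G : SimpleGraph V} {H : G.Subgraph}
    {σ : V → V} (hσ : ∀ a b, H.Adj (σ a) (σ b) → H.Adj a b) {A : Set V} (hA : G.IsIndepSet A)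
    (h : ∀ a ∈ A, σ a ∈ A ∨ G.neighborSet (σ a) ⊆ H.neighborSet (σ a)) :
    G.IsIndepSet (σ '' A) := by
  have not_adj_of_neighborSet_subset {a b : V} (ha : a ∈ A) (hb : b ∈ A)
      (hH : G.neighborSet (σ a) ⊆ H.neighborSet (σ a)) : ¬ G.Adj (σ a) (σ b) := fun hadj =>
    have hab : G.Adj a b := (hσ a b (hH hadj)).adj_sub
    hA ha hb hab.ne hab
  rintro _ ⟨a, ha, rfl⟩ _ ⟨b, hb, rfl⟩ hne
  rcases h a ha with haA | haH
  · rcases h b hb with hbA | hbH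
    · exact hA haA hbA hne
    · exact fun hadj => not_adj_of_neighborSet_subset hb ha hbH hadj.symm
  · exact not_adj_of_neighborSet_subset ha hb haH

variable [Fintype V] {G : SimpleGraph V}

theorem mem_ekrStar {r : ℕ} {v : V} {A : Finset V} :
    A ∈ ekrStar G r v ↔ (G.IsIndepSet (A : Set V) ∧ #A = r) ∧ v ∈ A := by
  have indep_iff : (∀ a ∈ A, ∀ b ∈ A, ¬ G.Adj a b) ↔ G.IsIndepSet (A : Set V) :=
    ⟨fun h a ha b hb _ => h a ha b hb, fun h a ha b hb hadj => h ha hb hadj.ne hadj⟩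
  simp only [ekrStar, indepSetsSize, indepSets, mem_filter, mem_univ, true_and, indep_iff]

theorem card_ekrStar_le_of_perm (σ : Equiv.Perm V) {u v : V} (hσ : σ u = v)
    (hindep : ∀ A : Set V, G.IsIndepSet A → u ∈ A → G.IsIndepSet (σ '' A)) (r : ℕ) :
    #(ekrStar G r u) ≤ #(ekrStar G r v) := by
  refine card_le_card_of_injOn (map σ.toEmbedding) (fun A hA => ?_) (Finset.map_injective _).injOn
  obtain ⟨⟨hA, hcard⟩, hu⟩ := mem_ekrStar.1 hA
  refine mem_ekrStar.2 ⟨⟨?_, (card_map _).trans hcard⟩, mem_map.2 ⟨u, hu, hσ⟩⟩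
  rw [coe_map]
  exact hindep A hA hu

end IndependentSets

section PathReversal

variable {G : SimpleGraph V} {u v : V} {p : G.Walk u v}

/-- The permutation of the vertices that reverses the path `p`, swapping `p.getVert i` with
`p.getVert (p.length - i)`, and fixes all vertices off `p`. -/
noncomputable def pathReversal (hp : p.IsPath) : Equiv.Perm V :=
  Fin.revPerm.viaFintypeEmbedding
    ⟨fun i : Fin (p.length + 1) => p.getVert i, fun i j hij =>
      Fin.ext (hp.getVert_injOn (Nat.le_of_lt_succ i.2) (Nat.le_of_lt_succ j.2) hij)⟩

theorem pathReversal_getVert (hp : p.IsPath) {i : ℕ} (hi : i ≤ p.length) :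
    pathReversal hp (p.getVert i) = p.getVert (p.length - i) := by
  refine (Equiv.Perm.viaFintypeEmbedding_apply_image _ _
    (⟨i, Nat.lt_succ_of_le hi⟩ : Fin (p.length + 1))).trans (congrArg p.getVert ?_)
  simp [Fin.val_rev]

theorem pathReversal_of_notMem_support (hp : p.IsPath) {w : V} (hw : w ∉ p.support) :
    pathReversal hp w = w := by
  refine Equiv.Perm.viaFintypeEmbedding_apply_notMem_range _ _ ?_
  rintro ⟨i, rfl⟩
  exact hw (p.getVert_mem_support i)

theorem pathReversal_end (hp : p.IsPath) : pathReversal hp v = u := by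
  simpa using pathReversal_getVert hp le_rfl

theorem pathReversal_involutive (hp : p.IsPath) : Function.Involutive (pathReversal hp) := by
  intro w
  by_cases hw : w ∈ p.support
  · obtain ⟨i, rfl, hi⟩ := Walk.mem_support_iff_exists_getVert.1 hw
    rw [pathReversal_getVert hp hi, pathReversal_getVert hp (Nat.sub_le _ _), Nat.sub_sub_self hi]
  · rw [pathReversal_of_notMem_support hp hw, pathReversal_of_notMem_support hp hw]

theorem toSubgraph_adj_pathReversal (hp : p.IsPath) {a b : V} (hab : p.toSubgraph.Adj a b) :
    p.toSubgraph.Adj (pathReversal hp a) (pathReversal hp b) := by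
  have reversed_edge {i : ℕ} (hi : i < p.length) : p.toSubgraph.Adj
      (pathReversal hp (p.getVert (i + 1))) (pathReversal hp (p.getVert i)) := by
    rw [pathReversal_getVert hp hi, pathReversal_getVert hp hi.le,
      show p.length - i = p.length - (i + 1) + 1 by lia]
    exact p.toSubgraph_adj_getVert (by lia)
  obtain ⟨i, hedge, hi⟩ := p.toSubgraph_adj_iff.1 hab
  rcases Sym2.eq_iff.1 hedge with ⟨rfl, rfl⟩ | ⟨rfl, rfl⟩
  · exact (reversed_edge hi).symm
  · exact reversed_edge hi

theorem pathReversal_mem_or_eq_getVert (hp : p.IsPath) {A : Set V} (hA : G.IsIndepSet A)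
    (hv : v ∈ A) {a : V} (ha : a ∈ A) :
    pathReversal hp a ∈ A ∨ ∃ k < p.length, k ≠ 1 ∧ pathReversal hp a = p.getVert k := by
  by_cases hsupp : a ∈ p.support
  · obtain ⟨i, rfl, hi⟩ := Walk.mem_support_iff_exists_getVert.1 hsupp
    rw [pathReversal_getVert hp hi]
    rcases Nat.eq_zero_or_pos i with rfl | hpos
    · left
      simpa using hv
    · refine .inr ⟨p.length - i, by lia, fun hpenult => ?_, rfl⟩
      have hadj : G.Adj (p.getVert i) v := by
        simpa [show i + 1 = p.length by lia] using
          p.adj_getVert_succ (show i < p.length by lia)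
      exact hA ha hv hadj.ne hadj
  · left
    rwa [pathReversal_of_notMem_support hp hsupp]

theorem isIndepSet_image_pathReversal (hp : p.IsPath)
    (hnbr : ∀ k < p.length, k ≠ 1 →
      G.neighborSet (p.getVert k) ⊆ p.toSubgraph.neighborSet (p.getVert k))
    {A : Set V} (hA : G.IsIndepSet A) (hv : v ∈ A) :
    G.IsIndepSet (pathReversal hp '' A) := by
  refine isIndepSet_image_of_mem_or_neighborSet_subset (H := p.toSubgraph)
    (fun a b hab => ?_) hA fun a ha => ?_
  · simpa only [pathReversal_involutive hp _] using toSubgraph_adj_pathReversal hp hab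
  · refine (pathReversal_mem_or_eq_getVert hp hA hv ha).imp_right ?_
    rintro ⟨k, hk, hk1, hak⟩
    rw [hak]
    exact hnbr k hk hk1

theorem card_ekrStar_le_of_isPath [Fintype V] (hp : p.IsPath)
    (hnbr : ∀ k < p.length, k ≠ 1 →
      G.neighborSet (p.getVert k) ⊆ p.toSubgraph.neighborSet (p.getVert k)) (r : ℕ) :
    #(ekrStar G r v) ≤ #(ekrStar G r u) :=
  card_ekrStar_le_of_perm (pathReversal hp) (pathReversal_end hp)
    (fun _ hA hv => isIndepSet_image_pathReversal hp hnbr hA hv) r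

end PathReversal

section Degrees

variable {G : SimpleGraph V} {u v : V}

theorem neighborSet_subset_of_degree_le_ncard (H : G.Subgraph) [Fintype (G.neighborSet u)]
    (h : G.degree u ≤ (H.neighborSet u).ncard) : G.neighborSet u ⊆ H.neighborSet u := by
  rw [← G.card_neighborSet_eq_degree, ← Nat.card_eq_fintype_card] at h
  exact (Set.eq_of_subset_of_ncard_le (H.neighborSet_subset u) h).ge

variable {p : G.Walk u v}

theorem neighborSet_start_subset_toSubgraph [Fintype (G.neighborSet u)] (hp : p.IsPath)
    (hnil : ¬ p.Nil) (hdeg : G.degree u ≤ 1) :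
    G.neighborSet u ⊆ p.toSubgraph.neighborSet u := by
  refine neighborSet_subset_of_degree_le_ncard _ ?_
  rwa [hp.neighborSet_toSubgraph_startpoint hnil, Set.ncard_singleton]

theorem neighborSet_getVert_subset_toSubgraph (hp : p.IsPath) {k : ℕ} (hk0 : k ≠ 0)
    (hk : k < p.length) [Fintype (G.neighborSet (p.getVert k))]
    (hdeg : G.degree (p.getVert k) ≤ 2) :
    G.neighborSet (p.getVert k) ⊆ p.toSubgraph.neighborSet (p.getVert k) := by
  refine neighborSet_subset_of_degree_le_ncard _ ?_
  rwa [hp.ncard_neighborSet_toSubgraph_internal_eq_two hk0 hk]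

end Degrees

theorem elongatedClaw_shortLimb_star_general [Fintype V] (r : ℕ) (G : SimpleGraph V) (c : V)
    (hdeg : ∀ v, v ≠ c → G.degree v ≤ 2) (x : V) (hx : G.degree x = 1) (hxc : G.Adj c x)
    (v : V) (hv : G.Reachable x v) : #(ekrStar G r v) ≤ #(ekrStar G r x) := by
  obtain ⟨p, hp⟩ := hv.exists_isPath
  refine card_ekrStar_le_of_isPath hp (fun k hk hk1 => ?_) r
  have hnil : ¬ p.Nil := Walk.not_nil_iff_lt_length.2 (by lia)
  have hxnbr := neighborSet_start_subset_toSubgraph hp hnil hx.le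
  rcases eq_or_ne k 0 with rfl | hk0
  · rwa [p.getVert_zero]
  have hc : c = p.getVert 1 := by
    rw [hp.neighborSet_toSubgraph_startpoint hnil] at hxnbr
    exact hxnbr hxc.symm
  have hkc : p.getVert k ≠ c := fun h =>
    hk1 (hp.getVert_injOn hk.le (show 1 ≤ p.length by lia) (h.trans hc))
  exact neighborSet_getVert_subset_toSubgraph hp hk0 hk (hdeg _ hkc)

/-- In an elongated claw with a short limb, any leaf `x` adjacent to the
root is the centre of a largest `r`-star. -/
theorem elongatedClaw_shortLimb_star {V : Type*} [Fintype V] (r : ℕ) (hr : 0 < r)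
    (G : SimpleGraph V) (c : V) (hG : IsElongatedClaw G c)
    (x : V) (hx : G.degree x = 1) (hxc : G.Adj c x) :
    ∀ v, (ekrStar G r v).card ≤ (ekrStar G r x).card := fun v =>
  elongatedClaw_shortLimb_star_general r G c hG.2 x hx hxc v (hG.1.connected.preconnected x v)
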